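/- Let $(A, \mathfrak{m})$ be a Cohen-Macaulay local ring of dimension $d > 0$ with infinite residue field, $I$ an $\mathfrak{m}$-primary ideal with $I^3 = QI^2$ and $\ell_A(I^2/QI) = 1$ for a minimal reduction $Q$ of $I$. Then $e_1(I) = e_0(I) - \ell_A(A/I) + 1$, and if $d \geq 2$ then $e_2(I) = 1$ and $e_i(I) = 0$ for all $3 \leq i \leq d$. -/

import Mathlib

/-
By prime avoidance, `Q` is generated by a regular sequence `b`, which is quasi-regular: the graded
ring of `Q` is a polynomial ring in `d` variables over `A ⧸ Q`. Hence the lengths of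
`A ⧸ Q ^ (n + 1)` and of `Q ^ n ⧸ I Q ^ n` are binomial multiples of those of `A ⧸ Q` and `A ⧸ I`.

Write `I ^ 2 = (z) + I Q` with `𝔪 z ⊆ I Q`. Since `I ^ (n + 2) = Q ^ n I ^ 2`, the graded piece
`I ^ (n + 2) ⧸ I Q ^ (n + 1)` of the Sally module is spanned by the products `F(b) z` with `F` a
form of degree `n`. The only relations are `F ∈ 𝔪[X]`: if some coefficient of `F` is a unit, then
`F` is a nonzerodivisor modulo every extended ideal, so `F(b) z ∈ I Q ^ (n + 1)` first forces
`z ∈ Q`, say `z = l(b)` for a linear form `l`, and then `l ∈ I[X]`, that is `z ∈ I Q`. So this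
piece has as many composition factors as there are monomials of degree `n`, which determines the
Hilbert function of `I`.
-/

open IsLocalRing

/-- A Noetherian local ring is Cohen–Macaulay of dimension `d` iff its Krull dimension
is `d` and there is a regular sequence of length `d` in the maximal ideal. -/
def IsCohenMacaulayLocal (A : Type*) [CommRing A] [IsLocalRing A] (d : ℕ) : Prop :=
  ringKrullDim A = d ∧
    ∃ rs : List A, rs.length = d ∧ (∀ x ∈ rs, x ∈ maximalIdeal A) ∧
      RingTheory.Sequence.IsRegular A rs

/-- `I` is primary to the maximal ideal (i.e. `𝔪`-primary). -/
def IsPrimaryToMax (A : Type*) [CommRing A] [IsLocalRing A] (I : Ideal A) : Prop :=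
  I ≤ maximalIdeal A ∧ maximalIdeal A ≤ I.radical

/-- The length of a module, as the Krull dimension of its submodule lattice. -/
noncomputable def moduleLength (A M : Type*) [CommRing A] [AddCommGroup M]
    [Module A M] : WithBot ℕ∞ :=
  Order.krullDim (Submodule A M)

/-! ### Regular sequences generating a parameter ideal -/

section RegularSequence

open RingTheory.Sequence Pointwise

universe u v

variable {A : Type u} [CommRing A]

lemma exists_add_notMem_of_forall_not_le {S : Set (Ideal A)} (hfin : S.Finite)
    (hprime : ∀ p ∈ S, p.IsPrime) {x : A} {K : Ideal A}
    (h : ∀ p ∈ S, ¬ Ideal.span {x} ⊔ K ≤ p) : ∃ k ∈ K, ∀ p ∈ S, x + k ∉ p := by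
  classical
  lift S to Finset (Ideal A) using hfin
  -- Adding an element of `J` changes nothing modulo the maximal primes of `S` avoiding `x`.
  set T := S.filter (Maximal (· ∈ S)) with hT
  set J := K ⊓ (T.filter (x ∉ ·)).inf id
  have hJp : ∀ p ∈ T.filter (x ∈ ·), ¬ J ≤ p := by
    intro p hp hle
    obtain ⟨⟨hpS, -⟩, hxp⟩ : (p ∈ S ∧ Maximal (· ∈ S) p) ∧ x ∈ p := by simpa [hT] using hp
    have := hprime p hpS
    rcases this.inf_le.1 hle with hKp | hinf
    · exact h p hpS (sup_le ((Ideal.span_singleton_le_iff_mem p).2 hxp) hKp)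
    · obtain ⟨q, hq, hqp⟩ := this.inf_le'.1 hinf
      obtain ⟨⟨-, hqmax⟩, hxq⟩ : (q ∈ S ∧ Maximal (· ∈ S) q) ∧ x ∉ q := by simpa [hT] using hq
      exact hxq (hqmax.eq_of_le hpS hqp ▸ hxp)
  obtain ⟨k, hkJ, hk⟩ : ∃ k ∈ J, ∀ p ∈ T.filter (x ∈ ·), k ∉ p := by
    by_contra! hcover
    obtain ⟨p, hp, hle⟩ := (Ideal.subset_union_prime (s := T.filter (x ∈ ·)) (f := id) ⊥ ⊥
      fun p hp _ _ => hprime p (Finset.mem_filter.1 (Finset.mem_filter.1 hp).1).1).1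
        fun k hk => Set.mem_iUnion₂.2 (by simpa using hcover k hk)
    exact hJp p hp hle
  refine ⟨k, hkJ.1, fun p hp hmem => ?_⟩
  obtain ⟨q, hpq, hq⟩ := S.exists_le_maximal hp
  have hqT : q ∈ T := Finset.mem_filter.2 ⟨hq.prop, hq⟩
  by_cases hxq : x ∈ q
  · exact hk q (Finset.mem_filter.2 ⟨hqT, hxq⟩) ((q.add_mem_iff_right hxq).1 (hpq hmem))
  · have hkq : k ∈ q := (Finset.inf_le (Finset.mem_filter.2 ⟨hqT, hxq⟩) :
      (T.filter (x ∉ ·)).inf id ≤ q) hkJ.2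
    exact hxq ((q.add_mem_iff_left hkq).1 (hpq hmem))

variable {M : Type v} [AddCommGroup M] [Module A M]

lemma smul_top_quotSMulTop_ne_top {I : Ideal A} (hIM : I • (⊤ : Submodule A M) ≠ ⊤)
    {x : A} (hx : x ∈ I) : I • (⊤ : Submodule A (QuotSMulTop x M)) ≠ ⊤ := by
  intro h
  have hmap := Submodule.map_smul'' I ⊤ (x • (⊤ : Submodule A M)).mkQ
  rw [Submodule.map_top, Submodule.range_mkQ, h, Submodule.map_mkQ_eq_top] at hmap
  refine hIM ((sup_eq_right.2 ?_).symm.trans hmap)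
  rw [← Submodule.ideal_span_singleton_smul]
  exact Submodule.smul_mono_left ((Ideal.span_singleton_le_iff_mem I).2 hx)

open CategoryTheory Abelian in
/-- The existence of a regular sequence of length `n + 1` in `I` is equivalent to the vanishing of
`Ext i (A ⧸ I) M` for `i ≤ n`, and the long exact sequence carries this over to `M ⧸ x M`. -/
lemma exists_isRegular_quotSMulTop [Small.{v} A] [IsNoetherianRing A] [Module.Finite A M]
    {I : Ideal A} (hIM : I • (⊤ : Submodule A M) ≠ ⊤) {n : ℕ} {rs : List A}
    (hlen : rs.length = n + 1) (hrsI : ∀ r ∈ rs, r ∈ I) (hrs : IsRegular M rs)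
    {x : A} (hxI : x ∈ I) (hx : IsSMulRegular M x) :
    ∃ ss : List A, ss.length = n ∧ (∀ s ∈ ss, s ∈ I) ∧ IsRegular (QuotSMulTop x M) ss := by
  have hzero : ∀ i < n + 1, Limits.IsZero (AddCommGrpCat.of
      (Ext (ModuleCat.of A (Shrink.{v} (A ⧸ I))) (ModuleCat.of A M) i)) := by
    have hRees := (ModuleCat.exists_isRegular_tfae I (n + 1) (ModuleCat.of A M) hIM.lt_top).out 3 1
    simpa only [AddCommGrpCat.isZero_of_iff_subsingleton] using hRees.1 ⟨rs, hlen, hrsI, hrs⟩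
  refine ((ModuleCat.exists_isRegular_tfae I n (ModuleCat.of A (QuotSMulTop x M))
    (smul_top_quotSMulTop_ne_top hIM hxI).lt_top).out 1 3).1 fun i hi => ?_
  exact AddCommGrpCat.subsingleton_of_isZero <| ShortComplex.Exact.isZero_of_both_zeros
    (Ext.covariant_sequence_exact₃' _
      (IsSMulRegular.smulShortComplex_shortExact (M := ModuleCat.of A M) hx) i (i + 1) rfl)
    ((hzero i (by omega)).eq_zero_of_src _) ((hzero (i + 1) (by omega)).eq_zero_of_tgt _)

lemma sup_span_singleton_add (x : A) {k : A} {K : Ideal A} (hk : k ∈ K) :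
    Ideal.span {x + k} ⊔ K = Ideal.span {x} ⊔ K := by
  refine le_antisymm ?_ ?_ <;>
    refine sup_le ((Ideal.span_singleton_le_iff_mem _).2 ?_) le_sup_right
  · exact add_mem (Ideal.mem_sup_left (Ideal.mem_span_singleton_self x)) (Ideal.mem_sup_right hk)
  · simpa using sub_mem (Ideal.mem_sup_left (Ideal.mem_span_singleton_self (x + k)))
      (Ideal.mem_sup_right hk : k ∈ Ideal.span {x + k} ⊔ K)

lemma exists_isSMulRegular_add [IsNoetherianRing A] [Module.Finite A M] {r : A}
    (hr : IsSMulRegular M r) (x : A) {K : Ideal A}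
    (hrad : r ∈ (Module.annihilator A M ⊔ (Ideal.span {x} ⊔ K)).radical) :
    ∃ k ∈ K, IsSMulRegular M (x + k) := by
  have hunion := biUnion_associatedPrimes_eq_compl_regular A M
  obtain ⟨k, hk, hxk⟩ := exists_add_notMem_of_forall_not_le (associatedPrimes.finite A M)
    (fun p hp => hp.isPrime) (x := x) (K := K) fun p hp hle => by
      have hann : Module.annihilator A M ≤ p :=
        Submodule.annihilator_top (R := A) (M := M) ▸ hp.annihilator_le
      have hrp : r ∈ p := hp.isPrime.radical_le_iff.2 (sup_le hann hle) hrad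
      exact hunion.subset (Set.mem_biUnion hp hrp) hr
  refine ⟨k, hk, ?_⟩
  by_contra hnot
  obtain ⟨p, hp, hmem⟩ := Set.mem_iUnion₂.1 (hunion.symm.subset hnot)
  exact hxk p hp hmem

lemma exists_isRegular_ofList_eq [Small.{v} A] [IsNoetherianRing A] [Module.Finite A M]
    {I : Ideal A} (hIM : I • (⊤ : Submodule A M) ≠ ⊤) {rs : List A}
    (hrsI : ∀ r ∈ rs, r ∈ I) (hrs : IsRegular M rs) {as : List A} (hlen : rs.length = as.length)
    (hasI : Ideal.ofList as ≤ I)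
    (hrad : I ≤ (Module.annihilator A M ⊔ Ideal.ofList as).radical) :
    ∃ bs : List A, bs.length = as.length ∧ Ideal.ofList bs = Ideal.ofList as ∧
      IsRegular M bs := by
  induction as generalizing M rs with
  | nil => exact ⟨[], rfl, rfl, List.length_eq_zero_iff.1 hlen ▸ hrs⟩
  | cons a as ih =>
    rw [Ideal.ofList_cons] at hasI hrad ⊢
    obtain ⟨r, rs, rfl⟩ := List.exists_cons_of_length_eq_add_one hlen
    obtain ⟨k, hk, hreg⟩ := exists_isSMulRegular_add ((isRegular_cons_iff M r rs).1 hrs).1 a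
      (hrad (hrsI r List.mem_cons_self))
    have hspan := sup_span_singleton_add a hk
    have hakI : a + k ∈ I :=
      hasI (hspan ▸ Ideal.mem_sup_left (Ideal.mem_span_singleton_self (a + k)))
    obtain ⟨ss, hss, hssI, hssreg⟩ := exists_isRegular_quotSMulTop hIM hlen hrsI hrs hakI hreg
    have hann : Module.annihilator A M ⊔ (Ideal.span {a} ⊔ Ideal.ofList as) ≤
        Module.annihilator A (QuotSMulTop (a + k) M) ⊔ Ideal.ofList as := by
      rw [← hspan]
      refine sup_le ((LinearMap.annihilator_le_of_surjective _
        (Submodule.mkQ_surjective _)).trans le_sup_left) (sup_le_sup_right ?_ _)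
      exact (Ideal.span_singleton_le_iff_mem _).2 (QuotSMulTop.mem_annihilator M (a + k))
    obtain ⟨bs, hbs, hbsas, hbsreg⟩ := ih (smul_top_quotSMulTop_ne_top hIM hakI) hssI hssreg hss
      (le_sup_right.trans hasI) (hrad.trans (Ideal.radical_mono hann))
    exact ⟨(a + k) :: bs, by simp [hbs], by rw [Ideal.ofList_cons, hbsas, hspan], hbsreg.cons hreg⟩

end RegularSequence

/-! ### Quasi-regular families -/

section QuasiRegular

open MvPolynomial RingTheory.Sequence

variable {A ι : Type*} [CommRing A] {b : ι → A} {n : ℕ}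

lemma eval_mem_mul_span_pow {K : Ideal A} {F : MvPolynomial ι A}
    (hF : F.IsHomogeneous n) (hFK : F ∈ K.map (C : A →+* MvPolynomial ι A)) :
    eval b F ∈ K * Ideal.span (Set.range b) ^ n := by
  rw [F.as_sum, map_sum]
  refine sum_mem fun s hs => ?_
  rw [← mul_one (coeff s F), ← C_mul_monomial, map_mul, eval_C]
  refine Ideal.mul_mem_mul (mem_map_C_iff.1 hFK s)
    ((Ideal.mem_span_pow_iff_exists_isHomogeneous b _).2 ⟨_, isHomogeneous_monomial 1 ?_, rfl⟩)
  rw [Finsupp.degree_eq_weight_one]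
  exact hF (mem_support_iff.1 hs)

lemma exists_isHomogeneous_of_mem_mul_span_pow {K : Ideal A} {y : A}
    (hy : y ∈ K * Ideal.span (Set.range b) ^ n) :
    ∃ F : MvPolynomial ι A, F.IsHomogeneous n ∧ F ∈ K.map (C : A →+* MvPolynomial ι A) ∧
      eval b F = y := by
  induction hy using Submodule.mul_induction_on' with
  | mem_mul_mem c hc w hw =>
    obtain ⟨F, hF, rfl⟩ := (Ideal.mem_span_pow_iff_exists_isHomogeneous b _).1 hw
    exact ⟨C c * F, hF.C_mul c, Ideal.mul_mem_right _ _ (Ideal.mem_map_of_mem _ hc), by simp⟩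
  | add x _ y _ hx hy =>
    obtain ⟨F, hF, hFK, rfl⟩ := hx
    obtain ⟨G, hG, hGK, rfl⟩ := hy
    exact ⟨F + G, hF.add hG, add_mem hFK hGK, by simp⟩

/-- A family `b` is quasi-regular if, with `Q` the ideal it generates, a form of degree `n` whose
value at `b` lies in `Q ^ (n + 1)` has all its coefficients in `Q`; equivalently, the associated
graded ring of `Q` is the polynomial ring over `A ⧸ Q` in the classes of the `b i`. -/
def IsQuasiRegular (b : ι → A) : Prop :=
  ∀ (n : ℕ) (F : MvPolynomial ι A), F.IsHomogeneous n →
    eval b F ∈ Ideal.span (Set.range b) ^ (n + 1) →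
      F ∈ (Ideal.span (Set.range b)).map (C : A →+* MvPolynomial ι A)

lemma IsQuasiRegular.eval_mem_mul_span_pow_iff (hb : IsQuasiRegular b) {I : Ideal A}
    (hI : Ideal.span (Set.range b) ≤ I) {F : MvPolynomial ι A} (hF : F.IsHomogeneous n) :
    eval b F ∈ I * Ideal.span (Set.range b) ^ n ↔ F ∈ I.map (C : A →+* MvPolynomial ι A) := by
  refine ⟨fun h => ?_, eval_mem_mul_span_pow hF⟩
  obtain ⟨G, hG, hGI, hGF⟩ := exists_isHomogeneous_of_mem_mul_span_pow h
  have hsub : F - G ∈ I.map (C : A →+* MvPolynomial ι A) :=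
    Ideal.map_mono hI (hb n _ (hF.sub hG) (by simp [hGF]))
  simpa using add_mem hsub hGI

lemma IsQuasiRegular.isSMulRegular_quotient_pow (hb : IsQuasiRegular b) {x : A}
    (hx : IsSMulRegular (A ⧸ Ideal.span (Set.range b)) x) (n : ℕ) :
    IsSMulRegular (A ⧸ Ideal.span (Set.range b) ^ n) x := by
  refine (isSMulRegular_quotient_iff_mem_of_smul_mem _ x).2 fun v hv => ?_
  induction n with
  | zero => simp
  | succ n ih =>
    obtain ⟨F, hF, rfl⟩ := (Ideal.mem_span_pow_iff_exists_isHomogeneous b _).1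
      (ih (Ideal.pow_le_pow_right n.le_succ hv))
    have hxF := hb n (C x * F) (hF.C_mul x) (by simpa using hv)
    rw [pow_succ']
    refine eval_mem_mul_span_pow hF (mem_map_C_iff.2 fun s => ?_)
    exact mem_of_isSMulRegular_quotient_of_smul_mem hx (by simpa using mem_map_C_iff.1 hxF s)

lemma isHomogeneous_of_X_mul {i : ι} {F : MvPolynomial ι A}
    (hF : (X i * F).IsHomogeneous (n + 1)) : F.IsHomogeneous n := by
  intro s hs
  rw [← coeff_X_mul s i F] at hs
  have hdeg := hF hs
  rw [map_add, Finsupp.weight_single, Pi.one_apply, smul_eq_mul, mul_one, add_comm] at hdeg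
  exact Nat.add_right_cancel hdeg

lemma exists_isHomogeneous_rename_succ_add_X_zero_mul {d : ℕ} {F : MvPolynomial (Fin (d + 1)) A}
    (hF : F.IsHomogeneous (n + 1)) :
    ∃ (G : MvPolynomial (Fin d) A) (H : MvPolynomial (Fin (d + 1)) A), G.IsHomogeneous (n + 1) ∧
      H.IsHomogeneous n ∧ F = rename Fin.succ G + X 0 * H := by
  let φ : MvPolynomial (Fin (d + 1)) A →ₐ[A] MvPolynomial (Fin d) A := aeval (Fin.cons 0 X)
  have hφ : (φ F).IsHomogeneous (n + 1) := by
    simpa using hF.aeval _ (n := 1) fun i => by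
      cases i using Fin.cases with
      | zero => exact isHomogeneous_zero _ _ _
      | succ i => exact isHomogeneous_X A i
  obtain ⟨H, hH⟩ : X 0 ∣ F - rename Fin.succ (φ F) := by
    have hcomp : (Ideal.Quotient.mkₐ A (Ideal.span {X 0})).comp ((rename Fin.succ).comp φ) =
        Ideal.Quotient.mkₐ A (Ideal.span {(X 0 : MvPolynomial (Fin (d + 1)) A)}) := by
      ext i
      cases i using Fin.cases <;> simp [φ]
    rw [← Ideal.mem_span_singleton, ← Ideal.Quotient.eq]
    exact (DFunLike.congr_fun hcomp F).symm
  exact ⟨φ F, H, hφ, isHomogeneous_of_X_mul (hH ▸ hF.sub hφ.rename_isHomogeneous),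
    by rw [← hH, add_sub_cancel]⟩

lemma rename_mem_map_C {κ : Type*} {f : ι → κ} {K L : Ideal A} (hKL : K ≤ L)
    {F : MvPolynomial ι A} (hF : F ∈ K.map (C : A →+* MvPolynomial ι A)) :
    rename f F ∈ L.map (C : A →+* MvPolynomial κ A) := by
  have hle : K.map (C : A →+* MvPolynomial ι A) ≤
      (L.map (C : A →+* MvPolynomial κ A)).comap (rename f : MvPolynomial ι A →ₐ[A] _) := by
    refine Ideal.map_le_iff_le_comap.2 fun c hc => ?_
    simpa using Ideal.mem_map_of_mem (C : A →+* MvPolynomial κ A) (hKL hc)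
  exact hle hF

lemma mem_map_C_of_eval_mem_span_pow
    (hb : ∀ F : MvPolynomial ι A, F.IsHomogeneous n → eval b F = 0 →
      F ∈ (Ideal.span (Set.range b)).map (C : A →+* MvPolynomial ι A))
    {F : MvPolynomial ι A} (hF : F.IsHomogeneous n)
    (hmem : eval b F ∈ Ideal.span (Set.range b) ^ (n + 1)) :
    F ∈ (Ideal.span (Set.range b)).map (C : A →+* MvPolynomial ι A) := by
  rw [pow_succ'] at hmem
  obtain ⟨G, hG, hGQ, hGF⟩ := exists_isHomogeneous_of_mem_mul_span_pow hmem
  simpa using add_mem (hb (F - G) (hF.sub hG) (by rw [map_sub, hGF, sub_self])) hGQ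

lemma IsQuasiRegular.of_tail {d : ℕ} {b : Fin (d + 1) → A} (hb : IsQuasiRegular (Fin.tail b))
    (hx : IsSMulRegular (A ⧸ Ideal.span (Set.range (Fin.tail b))) (b 0)) : IsQuasiRegular b := by
  have hle : Ideal.span (Set.range (Fin.tail b)) ≤ Ideal.span (Set.range b) :=
    Ideal.span_mono (by rintro _ ⟨i, rfl⟩; exact ⟨i.succ, rfl⟩)
  intro n
  induction n with
  | zero =>
    intro F hF hmem
    rw [← totalDegree_zero_iff_isHomogeneous, totalDegree_eq_zero_iff_eq_C] at hF
    rw [hF] at hmem ⊢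
    exact Ideal.mem_map_of_mem _ (by simpa using hmem)
  | succ n ih =>
    intro F
    refine mem_map_C_of_eval_mem_span_pow fun F hF hF0 => ?_
    obtain ⟨G, H, hG, hH, rfl⟩ := exists_isHomogeneous_rename_succ_add_X_zero_mul hF
    replace hF0 : eval (Fin.tail b) G + b 0 * eval b H = 0 := by
      rwa [map_add, map_mul, eval_X, eval_rename] at hF0
    have hHmem : eval b H ∈ Ideal.span (Set.range (Fin.tail b)) ^ (n + 1) := by
      refine mem_of_isSMulRegular_quotient_of_smul_mem (hb.isSMulRegular_quotient_pow hx _) ?_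
      rw [smul_eq_mul, eq_neg_of_add_eq_zero_right hF0, neg_mem_iff]
      exact (Ideal.mem_span_pow_iff_exists_isHomogeneous _ _).2 ⟨G, hG, rfl⟩
    obtain ⟨P, hP, hPH⟩ := (Ideal.mem_span_pow_iff_exists_isHomogeneous _ _).1 hHmem
    have hGP := hb (n + 1) (G + C (b 0) * P) (hG.add (hP.C_mul _)) (by
      rw [map_add, map_mul, eval_C, hPH, hF0]
      exact zero_mem _)
    have hGQ := rename_mem_map_C (f := Fin.succ) hle hGP
    rw [map_add, map_mul, rename_C] at hGQ
    refine add_mem ((add_mem_cancel_right (Ideal.mul_mem_right _ _ (Ideal.mem_map_of_mem _ ?_))).1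
      hGQ) (Ideal.mul_mem_left _ _ (ih H hH (Ideal.pow_right_mono hle _ hHmem)))
    exact Ideal.subset_span ⟨0, rfl⟩

lemma isQuasiRegular_of_isEmpty [IsEmpty ι] (b : ι → A) : IsQuasiRegular b := by
  intro n F _ hmem
  rw [Set.range_eq_empty, Ideal.span_empty, ← Ideal.zero_eq_bot, zero_pow n.succ_ne_zero,
    Ideal.zero_eq_bot, Ideal.mem_bot, eq_C_of_isEmpty F, eval_C] at hmem
  rw [eq_C_of_isEmpty F, hmem, C_0]
  exact zero_mem _

lemma isQuasiRegular_get_of_isWeaklyRegular_reverse {bs : List A}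
    (hbs : IsWeaklyRegular A bs.reverse) : IsQuasiRegular bs.get := by
  induction bs with
  | nil => exact isQuasiRegular_of_isEmpty (ι := Fin 0) _
  | cons x bs ih =>
    rw [List.reverse_cons, isWeaklyRegular_append_iff, isWeaklyRegular_singleton_iff] at hbs
    refine IsQuasiRegular.of_tail (ih hbs.1) ?_
    have hspan : Ideal.ofList bs.reverse • ⊤ = Ideal.span (Set.range bs.get) := by
      simp [Ideal.ofList, Set.range_list_get]
    exact hspan ▸ hbs.2

lemma exists_isQuasiRegular_span_eq {A : Type*} [CommRing A] [IsLocalRing A] [IsNoetherianRing A]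
    {d : ℕ} (hA : IsCohenMacaulayLocal A d) (a : Fin d → A)
    (ha : IsPrimaryToMax A (Ideal.span (Set.range a))) :
    ∃ b : Fin d → A, IsQuasiRegular b ∧ Ideal.span (Set.range b) = Ideal.span (Set.range a) := by
  obtain ⟨-, rs, hlen, hrs, hreg⟩ := hA
  have hspan : Ideal.ofList (List.ofFn a) = Ideal.span (Set.range a) := by
    simp [Ideal.ofList, Set.range]
  obtain ⟨bs, hbs, hbsa, hbsreg⟩ := exists_isRegular_ofList_eq (M := A)
    (I := maximalIdeal A) (as := List.ofFn a) (by simpa using Ideal.IsPrime.ne_top')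
    hrs hreg (by simpa using hlen) (hspan ▸ ha.1)
    (hspan ▸ ha.2.trans (Ideal.radical_mono le_sup_right))
  obtain ⟨cs, rfl⟩ := List.reverse_surjective bs
  obtain rfl : cs.length = d := by simpa using hbs
  refine ⟨cs.get, isQuasiRegular_get_of_isWeaklyRegular_reverse hbsreg.toIsWeaklyRegular, ?_⟩
  rw [← hspan, ← hbsa]
  simp [Ideal.ofList]

end QuasiRegular

section ZeroDivisors

open MvPolynomial nonZeroDivisors

variable {R : Type*} [CommRing R]

lemma mem_nonZeroDivisors_of_coeff_mem_fin {n : ℕ} {F : MvPolynomial (Fin n) R} (s : Fin n →₀ ℕ)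
    (hs : coeff s F ∈ R⁰) : F ∈ (MvPolynomial (Fin n) R)⁰ := by
  induction n with
  | zero =>
    refine mem_nonZeroDivisors_of_injective (isEmptyAlgEquiv R (Fin 0)).injective ?_
    rwa [eq_C_of_isEmpty F, ← algebraMap_eq, AlgEquiv.commutes, Subsingleton.elim 0 s]
  | succ n ih =>
    refine mem_nonZeroDivisors_of_injective (finSuccEquiv R n).injective
      (Polynomial.mem_nonzeroDivisors_of_coeff_mem (s 0) (ih s.tail ?_))
    rwa [finSuccEquiv_coeff_coeff, Finsupp.cons_tail]

lemma mem_nonZeroDivisors_of_coeff_mem {ι : Type*} [Finite ι] {F : MvPolynomial ι R} (s : ι →₀ ℕ)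
    (hs : coeff s F ∈ R⁰) : F ∈ (MvPolynomial ι R)⁰ := by
  obtain ⟨n, ⟨e⟩⟩ := Finite.exists_equiv_fin ι
  refine mem_nonZeroDivisors_of_injective (renameEquiv R e).injective
    (mem_nonZeroDivisors_of_coeff_mem_fin (s.mapDomain e) ?_)
  rwa [renameEquiv_apply, coeff_rename_mapDomain _ e.injective]

lemma mem_map_C_of_mul_mem {ι : Type*} [Finite ι] {I : Ideal R} {F G : MvPolynomial ι R}
    {s : ι →₀ ℕ} (hs : IsUnit (coeff s F)) (h : F * G ∈ I.map (C : R →+* MvPolynomial ι R)) :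
    G ∈ I.map (C : R →+* MvPolynomial ι R) := by
  have hker : I.map (C : R →+* MvPolynomial ι R) = RingHom.ker (map (Ideal.Quotient.mk I)) := by
    rw [MvPolynomial.ker_map, Ideal.mk_ker]
  rw [hker, RingHom.mem_ker] at h ⊢
  rw [map_mul] at h
  refine (mem_nonZeroDivisors_iff.1 (mem_nonZeroDivisors_of_coeff_mem s ?_)).1 _ h
  rw [coeff_map]
  exact (hs.map _).mem_nonZeroDivisors

end ZeroDivisors

/-! ### Lengths -/

section Lengths

open MvPolynomial

variable {A : Type*} [CommRing A]

lemma length_quotient_eq_add {P N : Type*} [AddCommGroup P] [Module A P] [AddCommGroup N]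
    [Module A N] (ψ : P →ₗ[A] N) (L : Submodule A N) :
    Module.length A (N ⧸ L) =
      Module.length A (P ⧸ L.comap ψ) + Module.length A (N ⧸ LinearMap.range ψ ⊔ L) := by
  refine Module.length_eq_add_of_exact (Submodule.mapQ (L.comap ψ) L ψ le_rfl)
    (Submodule.factor le_sup_right) ?_ (Submodule.factor_surjective le_sup_right) ?_
  · rw [← LinearMap.ker_eq_bot, Submodule.ker_mapQ, Submodule.mkQ_map_self]
  · rw [LinearMap.exact_iff, Submodule.range_mapQ, Submodule.factor, Submodule.ker_mapQ,
      Submodule.comap_id, Submodule.map_sup, Submodule.mkQ_map_self, sup_bot_eq]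

lemma mem_map_C_iff_of_isHomogeneous {ι : Type*} [Fintype ι] [DecidableEq ι] {n : ℕ} {K : Ideal A}
    {F : MvPolynomial ι A} (hF : F.IsHomogeneous n) :
    F ∈ K.map (C : A →+* MvPolynomial ι A) ↔
      ∀ s : (Finset.univ : Finset ι).finsuppAntidiag n, coeff s.1 F ∈ K := by
  refine mem_map_C_iff.trans ⟨fun h s => h s.1, fun h s => ?_⟩
  by_cases hs : s.degree = n
  · exact h ⟨s, by simpa [Finset.mem_finsuppAntidiag, Finsupp.degree_eq_sum] using hs⟩
  · rw [hF.coeff_eq_zero hs]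
    exact zero_mem K

lemma length_homogeneousSubmodule_quotient_map_C {ι : Type*} [Fintype ι] (n : ℕ) (K : Ideal A) :
    Module.length A (homogeneousSubmodule ι A n ⧸
      ((K.map (C : A →+* MvPolynomial ι A)).restrictScalars A).submoduleOf
        (homogeneousSubmodule ι A n)) =
      (Fintype.card ι).multichoose n * Module.length A (A ⧸ K) := by
  classical
  let φ : homogeneousSubmodule ι A n →ₗ[A] (Finset.univ : Finset ι).finsuppAntidiag n → A ⧸ K :=
    LinearMap.pi fun s => K.mkQ ∘ₗ lcoeff A s.1 ∘ₗ (homogeneousSubmodule ι A n).subtype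
  have hker : LinearMap.ker φ = ((K.map (C : A →+* MvPolynomial ι A)).restrictScalars A).submoduleOf
      (homogeneousSubmodule ι A n) := by
    ext F
    refine Iff.trans ?_ (mem_map_C_iff_of_isHomogeneous F.2).symm
    simp [φ, funext_iff, Ideal.Quotient.eq_zero_iff_mem]
  have hsurj : Function.Surjective φ := by
    intro c
    obtain ⟨c, rfl⟩ := (Submodule.mkQ_surjective K).comp_left c
    refine ⟨⟨∑ s, monomial s.1 (c s), sum_mem fun s _ => isHomogeneous_monomial _ ?_⟩, ?_⟩
    · rw [Finsupp.degree_eq_sum, (Finset.mem_finsuppAntidiag.1 s.2).1]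
    · ext s
      simp [φ, coeff_monomial]
  rw [← hker, (φ.quotKerEquivOfSurjective hsurj).length_eq, Module.length_pi_of_fintype]
  simp [Finset.card_finsuppAntidiag_nat_eq_multichoose]

lemma length_quotient_eq_multichoose_mul_add {ι : Type*} [Fintype ι] (b : ι → A) (n : ℕ) (z : A)
    {K L : Ideal A} (h : ∀ F : MvPolynomial ι A, F.IsHomogeneous n →
      (eval b F * z ∈ L ↔ F ∈ K.map (C : A →+* MvPolynomial ι A))) :
    Module.length A (A ⧸ L) = (Fintype.card ι).multichoose n * Module.length A (A ⧸ K) +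
      Module.length A (A ⧸ Ideal.span (Set.range b) ^ n * Ideal.span {z} ⊔ L) := by
  let ψ : homogeneousSubmodule ι A n →ₗ[A] A :=
    LinearMap.mulRight A z ∘ₗ (aeval b).toLinearMap ∘ₗ (homogeneousSubmodule ι A n).subtype
  have hcomap : Submodule.comap ψ L =
      ((K.map (C : A →+* MvPolynomial ι A)).restrictScalars A).submoduleOf
        (homogeneousSubmodule ι A n) := by
    ext F
    exact h F.1 F.2
  have hrange : LinearMap.range ψ = Ideal.span (Set.range b) ^ n * Ideal.span {z} := by
    ext y
    simp [ψ, Ideal.mem_mul_span_singleton, Ideal.mem_span_pow_iff_exists_isHomogeneous,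
      aeval_eq_eval]
  rw [length_quotient_eq_add ψ L, hcomap, length_homogeneousSubmodule_quotient_map_C, hrange]

lemma pow_add_eq_pow_mul_pow {M : Type*} [Monoid M] {x q : M} {k : ℕ}
    (h : x ^ (k + 1) = q * x ^ k) (n : ℕ) : x ^ (n + k) = q ^ n * x ^ k := by
  induction n with
  | zero => rw [zero_add, pow_zero, one_mul]
  | succ n ih =>
    rw [add_right_comm, pow_succ, ih, mul_assoc, ← pow_succ, h, ← mul_assoc, ← pow_succ]

lemma exists_eq_span_singleton_sup_of_length_eq_one [IsLocalRing A] {P : Type*} [AddCommGroup P]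
    [Module A P] {L M : Submodule A P} (hLM : L ≤ M)
    (h : Module.length A (M ⧸ Submodule.comap M.subtype L) = 1) :
    ∃ z ∉ L, M = Submodule.span A {z} ⊔ L ∧ ∀ c ∈ maximalIdeal A, c • z ∈ L := by
  have hsimple := Module.length_eq_one_iff.1 h
  have hcov := (covBy_iff_quot_is_simple hLM).2 hsimple
  obtain ⟨z, hzM, hzL⟩ := SetLike.exists_of_lt hcov.lt
  refine ⟨z, hzL, ?_, fun c hc => ?_⟩
  · refine ((hcov.eq_or_eq le_sup_right
      (sup_le ((Submodule.span_singleton_le_iff_mem z M).2 hzM) hLM)).resolve_left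
        fun hL => hzL ?_).symm
    exact hL ▸ Submodule.mem_sup_left (Submodule.mem_span_singleton_self z)
  · rw [← IsLocalRing.eq_maximalIdeal (IsSimpleModule.annihilator_isMaximal
      (M := M ⧸ Submodule.comap M.subtype L)), Module.mem_annihilator] at hc
    have hcz := hc (Submodule.Quotient.mk ⟨z, hzM⟩)
    rwa [← Submodule.Quotient.mk_smul, Submodule.Quotient.mk_eq_zero] at hcz

lemma length_quotient_maximalIdeal (A : Type*) [CommRing A] [IsLocalRing A] :
    Module.length A (A ⧸ maximalIdeal A) = 1 :=
  Module.length_eq_one_iff.2 (isSimpleModule_iff_isCoatom.2 (maximalIdeal.isMaximal A).out)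

variable {ι : Type*} {b : ι → A} {I : Ideal A}

lemma IsQuasiRegular.mem_mul_span_of_eval_mul_mem [Finite ι] (hb : IsQuasiRegular b)
    (hI : Ideal.span (Set.range b) ≤ I) {n : ℕ} {F : MvPolynomial ι A} (hF : F.IsHomogeneous n)
    {s : ι →₀ ℕ} (hs : IsUnit (coeff s F)) {z : A}
    (hz : eval b F * z ∈ I * Ideal.span (Set.range b) ^ (n + 1)) :
    z ∈ I * Ideal.span (Set.range b) := by
  have hFz : F * C z ∈ (Ideal.span (Set.range b)).map (C : A →+* MvPolynomial ι A) :=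
    hb n _ (by simpa using hF.mul (isHomogeneous_C ι z)) (by simpa using Ideal.mul_le_right hz)
  have hzQ : z ∈ Ideal.span (Set.range b) := by
    simpa using mem_map_C_iff.1 (mem_map_C_of_mul_mem hs hFz) 0
  obtain ⟨l, hl, rfl⟩ := (Ideal.mem_span_iff_exists_isHomogeneous b z).1 hzQ
  have hFl : F * l ∈ I.map (C : A →+* MvPolynomial ι A) :=
    (hb.eval_mem_mul_span_pow_iff hI (hF.mul hl)).1 (by simpa using hz)
  simpa using eval_mem_mul_span_pow (b := b) hl (mem_map_C_of_mul_mem hs hFl)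

lemma IsQuasiRegular.eval_mul_mem_iff [Finite ι] [IsLocalRing A] (hb : IsQuasiRegular b)
    (hI : Ideal.span (Set.range b) ≤ I) {n : ℕ} {F : MvPolynomial ι A} (hF : F.IsHomogeneous n)
    {z : A} (hz : z ∉ I * Ideal.span (Set.range b))
    (hmz : ∀ c ∈ maximalIdeal A, c * z ∈ I * Ideal.span (Set.range b)) :
    eval b F * z ∈ I * Ideal.span (Set.range b) ^ (n + 1) ↔
      F ∈ (maximalIdeal A).map (C : A →+* MvPolynomial ι A) := by
  refine ⟨fun h => mem_map_C_iff.2 fun s => ?_, fun h => ?_⟩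
  · rw [mem_maximalIdeal, mem_nonunits_iff]
    exact fun hs => hz (hb.mem_mul_span_of_eval_mul_mem hI hF hs h)
  · have hle : maximalIdeal A * Ideal.span {z} ≤ I * Ideal.span (Set.range b) := by
      refine Ideal.mul_le.2 fun c hc y hy => ?_
      obtain ⟨w, rfl⟩ := Ideal.mem_span_singleton'.1 hy
      exact mul_left_comm w c z ▸ Ideal.mul_mem_left _ w (hmz c hc)
    have hmem := Ideal.mul_mem_mul (eval_mem_mul_span_pow (b := b) hF h)
      (Ideal.mem_span_singleton_self z)
    rw [mul_right_comm] at hmem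
    rw [pow_succ', ← mul_assoc]
    exact Ideal.mul_mono_left hle hmem

variable [Fintype ι]

lemma IsQuasiRegular.length_quotient_mul_pow (hb : IsQuasiRegular b)
    (hI : Ideal.span (Set.range b) ≤ I) (n : ℕ) :
    Module.length A (A ⧸ I * Ideal.span (Set.range b) ^ n) =
      (Fintype.card ι).multichoose n * Module.length A (A ⧸ I) +
        Module.length A (A ⧸ Ideal.span (Set.range b) ^ n) := by
  rw [length_quotient_eq_multichoose_mul_add b n 1 (K := I) fun F hF => by
      rw [mul_one, hb.eval_mem_mul_span_pow_iff hI hF],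
    Ideal.span_singleton_one, Ideal.mul_top, sup_eq_left.2 Ideal.mul_le_right]

lemma IsQuasiRegular.length_quotient_pow (hb : IsQuasiRegular b) (n : ℕ) :
    Module.length A (A ⧸ Ideal.span (Set.range b) ^ (n + 1)) =
      (Fintype.card ι + 1).multichoose n * Module.length A (A ⧸ Ideal.span (Set.range b)) := by
  induction n with
  | zero => rw [zero_add, pow_one, Nat.multichoose_zero_right, Nat.cast_one, one_mul]
  | succ n ih =>
    rw [pow_succ', hb.length_quotient_mul_pow le_rfl, ih, Nat.multichoose_succ_succ,
      Nat.cast_add, add_mul]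

theorem IsQuasiRegular.length_quotient_mul_pow_succ [IsLocalRing A] (hb : IsQuasiRegular b)
    (hI : Ideal.span (Set.range b) ≤ I) (hI3 : I ^ 3 = Ideal.span (Set.range b) * I ^ 2)
    (hlen : Module.length A
      (↥(I ^ 2) ⧸ Submodule.comap (I ^ 2).subtype (Ideal.span (Set.range b) * I)) = 1) (n : ℕ) :
    Module.length A (A ⧸ I * Ideal.span (Set.range b) ^ (n + 1)) =
      (Fintype.card ι).multichoose n + Module.length A (A ⧸ I ^ (n + 2)) := by
  rw [mul_comm _ I] at hlen
  obtain ⟨z, hz, hI2, hmz⟩ := exists_eq_span_singleton_sup_of_length_eq_one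
    (by rw [pow_two]; exact Ideal.mul_mono_right hI) hlen
  rw [length_quotient_eq_multichoose_mul_add b n z fun F hF => hb.eval_mul_mem_iff hI hF hz hmz,
    length_quotient_maximalIdeal, mul_one, pow_add_eq_pow_mul_pow hI3, hI2, Ideal.mul_sup,
    pow_succ, mul_left_comm]

theorem IsQuasiRegular.multichoose_add_length_quotient_pow [IsLocalRing A] (hb : IsQuasiRegular b)
    (hI : Ideal.span (Set.range b) ≤ I) (hI3 : I ^ 3 = Ideal.span (Set.range b) * I ^ 2)
    (hlen : Module.length A
      (↥(I ^ 2) ⧸ Submodule.comap (I ^ 2).subtype (Ideal.span (Set.range b) * I)) = 1) (n : ℕ) :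
    (Fintype.card ι).multichoose n + Module.length A (A ⧸ I ^ (n + 2)) =
      (Fintype.card ι).multichoose (n + 1) * Module.length A (A ⧸ I) +
        (Fintype.card ι + 1).multichoose n * Module.length A (A ⧸ Ideal.span (Set.range b)) := by
  rw [← hb.length_quotient_mul_pow_succ hI hI3 hlen, hb.length_quotient_mul_pow hI,
    hb.length_quotient_pow]

end Lengths

/-! ### Hilbert coefficients -/

section HilbertCoefficients

open Finset

/-- The Hilbert polynomial of degree `d` with Hilbert coefficients `e 0, …, e d`, at `n`. -/
def hilbertSum (d : ℕ) (e : ℕ → ℤ) (n : ℕ) : ℤ :=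
  ∑ i ∈ range (d + 1), (-1) ^ i * e i * ((n + d - i).choose (d - i) : ℤ)

lemma hilbertSum_succ_sub (d : ℕ) (e : ℕ → ℤ) (n : ℕ) :
    hilbertSum (d + 1) e (n + 1) - hilbertSum (d + 1) e n = hilbertSum d e (n + 1) := by
  rw [hilbertSum, hilbertSum, sum_range_succ, sum_range_succ _ (d + 1), Nat.sub_self,
    Nat.choose_zero_right, Nat.choose_zero_right, add_sub_add_right_eq_sub, ← sum_sub_distrib]
  refine sum_congr rfl fun i hi => ?_
  obtain ⟨j, rfl⟩ := Nat.exists_eq_add_of_le (mem_range_succ_iff.1 hi)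
  rw [← mul_sub, show n + 1 + (i + j + 1) - i = n + j + 1 + 1 by omega,
    show n + (i + j + 1) - i = n + j + 1 by omega, show n + 1 + (i + j) - i = n + j + 1 by omega,
    show i + j + 1 - i = j + 1 by omega, Nat.add_sub_cancel_left, Nat.choose_succ_succ,
    Nat.cast_add, add_sub_cancel_right]

lemma eq_of_hilbertSum_eq {d : ℕ} {e e' : ℕ → ℤ} {N : ℕ}
    (h : ∀ n ≥ N, hilbertSum d e n = hilbertSum d e' n) : ∀ i ≤ d, e i = e' i := by
  induction d generalizing N with
  | zero => simpa [hilbertSum] using h N le_rfl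
  | succ d ih =>
    have hlow : ∀ i ≤ d, e i = e' i := ih (N := N + 1) fun n hn => by
      obtain ⟨n, rfl⟩ := Nat.exists_eq_add_of_le' (Nat.one_le_of_lt hn)
      rw [← hilbertSum_succ_sub d e, ← hilbertSum_succ_sub d e', h _ (by omega), h _ (by omega)]
    intro i hi
    obtain hi | rfl := Nat.le_succ_iff.1 hi
    · exact hlow i hi
    · have hN := h N le_rfl
      rw [hilbertSum, hilbertSum, sum_range_succ, sum_range_succ _ (d + 1),
        sum_congr rfl fun i hi => by rw [hlow i (mem_range_succ_iff.1 hi)], add_right_inj] at hN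
      simpa using hN

lemma multichoose_succ_eq_choose (d n : ℕ) : (d + 1).multichoose n = (n + d).choose d := by
  rw [Nat.multichoose_eq, add_right_comm, Nat.add_sub_cancel, add_comm d n, Nat.choose_symm_add]

/-- The Hilbert coefficients `E, E - h + 1, 1, 0, 0, …` of an ideal whose Sally module has
multiplicity one, where `E` is the multiplicity and `h` the colength of the ideal. -/
def sallyCoeff (E h : ℤ) : ℕ → ℤ
  | 0 => E
  | 1 => E - h + 1
  | 2 => 1
  | _ + 3 => 0

lemma hilbertSum_sallyCoeff (E h : ℤ) (d n : ℕ) :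
    hilbertSum (d + 1) (sallyCoeff E h) (n + 1) =
      (d + 1).multichoose (n + 1) * h + (d + 2).multichoose n * E - (d + 1).multichoose n := by
  have hpascal (d : ℕ) : (n + 1 + (d + 1)).choose (d + 1) =
      (n + 1 + d).choose d + (n + (d + 1)).choose (d + 1) := by
    rw [← add_assoc, Nat.choose_succ_succ, add_right_comm n 1 d, add_assoc n d 1]
  rw [hilbertSum, multichoose_succ_eq_choose, multichoose_succ_eq_choose,
    multichoose_succ_eq_choose]
  rcases d with - | d
  · simp [sum_range_succ, sallyCoeff]
    ring
  · rw [sum_range_succ', sum_range_succ', sum_range_succ', sum_eq_zero fun i _ => by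
      simp [sallyCoeff]]
    simp only [sallyCoeff, zero_add, Nat.sub_zero, pow_zero, one_mul, hpascal,
      show n + 1 + (d + 1 + 1) - 1 = n + 1 + (d + 1) by omega,
      show n + 1 + (d + 1 + 1) - (1 + 1) = n + 1 + d by omega, Nat.add_sub_cancel,
      show d + 1 + 1 - (1 + 1) = d by omega]
    push_cast
    ring

end HilbertCoefficients

section SallyIdeals

lemma moduleLength_eq_natCast_iff {A M : Type*} [CommRing A] [AddCommGroup M] [Module A M]
    {n : ℕ} : moduleLength A M = (n : ℕ∞) ↔ Module.length A M = n := by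
  rw [moduleLength, ← Module.coe_length, WithBot.coe_inj]

variable {A : Type*} [CommRing A] [IsLocalRing A] {d : ℕ} {I : Ideal A} {H : ℕ → ℕ}

lemma IsPrimaryToMax.of_pow_le {J : Ideal A} (hI : IsPrimaryToMax A I) (hJI : J ≤ I) {n : ℕ}
    (hn : I ^ n ≤ J) : IsPrimaryToMax A J :=
  ⟨hJI.trans hI.1, hI.2.trans (Ideal.radical_le_radical_iff.2 fun _ hx =>
    ⟨n, hn (Ideal.pow_mem_pow hx n)⟩)⟩

theorem IsQuasiRegular.exists_eq_hilbertSum_sallyCoeff {b : Fin (d + 1) → A}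
    (hb : IsQuasiRegular b) (hI : Ideal.span (Set.range b) ≤ I)
    (hI3 : I ^ 3 = Ideal.span (Set.range b) * I ^ 2)
    (hlen : Module.length A
      (↥(I ^ 2) ⧸ Submodule.comap (I ^ 2).subtype (Ideal.span (Set.range b) * I)) = 1)
    (hH : ∀ n, Module.length A (A ⧸ I ^ (n + 1)) = H n) :
    ∃ E : ℤ, ∀ n, H (n + 1) = hilbertSum (d + 1) (sallyCoeff E (H 0)) (n + 1) := by
  have hfin : Module.length A (A ⧸ Ideal.span (Set.range b)) ≠ ⊤ := by
    have hle : I ^ 3 ≤ Ideal.span (Set.range b) := hI3 ▸ Ideal.mul_le_left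
    exact ne_top_of_le_ne_top (hH 2 ▸ ENat.natCast_ne_top (H 2))
      (Module.length_le_of_surjective _ (Submodule.factor_surjective hle))
  obtain ⟨E, hE⟩ := ENat.ne_top_iff_exists.1 hfin
  have hH0 : Module.length A (A ⧸ I) = H 0 := by rw [← hH 0, zero_add, pow_one]
  refine ⟨E, fun n => ?_⟩
  have hlength := hb.multichoose_add_length_quotient_pow hI hI3 hlen n
  rw [hH (n + 1), hH0, ← hE, Fintype.card_fin] at hlength
  have hcast : ((d + 1).multichoose n + H (n + 1) : ℤ) =
    (d + 1).multichoose (n + 1) * H 0 + (d + 2).multichoose n * E := by exact_mod_cast hlength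
  rw [hilbertSum_sallyCoeff, ← hcast, add_sub_cancel_left]

end SallyIdeals

theorem sally_vasconcelos_general (A : Type*) [CommRing A] [IsLocalRing A] [IsNoetherianRing A]
    (d : ℕ) (hd : 0 < d) (hCM : IsCohenMacaulayLocal A d)
    (I Q : Ideal A) (hI : IsPrimaryToMax A I)
    (a : Fin d → A) (hQ : Q = Ideal.span (Set.range a)) (hQI : Q ≤ I)
    (hI3 : I ^ 3 = Q * I ^ 2)
    (hlen : moduleLength A
      (↥(I ^ 2) ⧸ Submodule.comap (I ^ 2).subtype (Q * I)) = 1)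
    (H : ℕ → ℕ)
    (hH : ∀ n : ℕ, moduleLength A (A ⧸ I ^ (n + 1)) = (H n : ℕ∞))
    (e : ℕ → ℤ) (N : ℕ)
    (hHS : ∀ n ≥ N, (H n : ℤ) =
      ∑ i ∈ Finset.range (d + 1),
        (-1) ^ i * e i * ((n + d - i).choose (d - i) : ℤ)) :
    e 1 = e 0 - (H 0 : ℤ) + 1 ∧
      (2 ≤ d → e 2 = 1 ∧ ∀ i : ℕ, 3 ≤ i → i ≤ d → e i = 0) := by
  have hQm : IsPrimaryToMax A Q := hI.of_pow_le hQI (hI3 ▸ Ideal.mul_le_left)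
  obtain ⟨b, hb, hbQ⟩ := exists_isQuasiRegular_span_eq hCM a (hQ ▸ hQm)
  obtain rfl : Q = Ideal.span (Set.range b) := hQ.trans hbQ.symm
  obtain ⟨d, rfl⟩ := Nat.exists_eq_add_of_le' hd
  obtain ⟨E, hE⟩ := hb.exists_eq_hilbertSum_sallyCoeff hQI hI3
    (moduleLength_eq_natCast_iff.1 hlen) fun n => moduleLength_eq_natCast_iff.1 (hH n)
  have he : ∀ i ≤ d + 1, e i = sallyCoeff E (H 0) i :=
    eq_of_hilbertSum_eq (N := N + 1) fun n hn => by
      obtain ⟨n, rfl⟩ := Nat.exists_eq_add_of_le' (Nat.one_le_of_lt hn)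
      rw [← hE n, hHS (n + 1) (by omega), hilbertSum]
  refine ⟨?_, fun h2 => ⟨he 2 h2, fun i hi hid => ?_⟩⟩
  · rw [he 1 (by omega), he 0 (by omega), sallyCoeff, sallyCoeff]
  · obtain ⟨i, rfl⟩ := Nat.exists_eq_add_of_le' hi
    rw [he _ hid, sallyCoeff]

/-- Sally–Vasconcelos: if `I³ = QI²` and `ℓ_A(I²/QI) = 1`, then
`e₁ = e₀ - ℓ_A(A/I) + 1`; and if `d ≥ 2` then `e₂ = 1` and `eᵢ = 0` for `3 ≤ i ≤ d`.
Here `H n = ℓ_A(A/I^{n+1})` (so `H 0 = ℓ_A(A/I)`) and the Hilbert coefficients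
`e i` are specified by the Hilbert–Samuel polynomial. -/
theorem sally_vasconcelos (A : Type*) [CommRing A] [IsLocalRing A] [IsNoetherianRing A]
    [Infinite (ResidueField A)]
    (d : ℕ) (hd : 0 < d) (hCM : IsCohenMacaulayLocal A d)
    (I Q : Ideal A) (hI : IsPrimaryToMax A I)
    (a : Fin d → A) (hQ : Q = Ideal.span (Set.range a)) (hQI : Q ≤ I)
    (hred : ∃ r : ℕ, I ^ (r + 1) = Q * I ^ r)
    (hI3 : I ^ 3 = Q * I ^ 2)
    (hlen : moduleLength A
      (↥(I ^ 2) ⧸ Submodule.comap (I ^ 2).subtype (Q * I)) = 1)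
    (H : ℕ → ℕ)
    (hH : ∀ n : ℕ, moduleLength A (A ⧸ I ^ (n + 1)) = (H n : ℕ∞))
    (e : ℕ → ℤ) (N : ℕ)
    (hHS : ∀ n ≥ N, (H n : ℤ) =
      ∑ i ∈ Finset.range (d + 1),
        (-1) ^ i * e i * ((n + d - i).choose (d - i) : ℤ)) :
    e 1 = e 0 - (H 0 : ℤ) + 1 ∧
      (2 ≤ d → e 2 = 1 ∧ ∀ i : ℕ, 3 ≤ i → i ≤ d → e i = 0) :=
  sally_vasconcelos_general A d hd hCM I Q hI a hQ hQI hI3 hlen H hH e N hHS
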